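/- On a coordinate chart of TM ⊕ TM over a Riemannian manifold (M,g), with f₁ and f₁₂₁ = R∂_x − Γ(R,R)∂_R − Γ(R,V)∂_V as above, the iterated bracket f₁₁₂₁ = [f₁, f₁₂₁] has x-component −V, and its integral curves satisfy ẋ = −V, D_tR = −𝓡(V,R)R, D_tV = −𝓡(V,R)V, where 𝓡 is the Riemann curvature tensor of (M,g). -/

import Mathlib

/-- Lie bracket of vector fields on a normed space (coordinate formula
`[X,Y] = DY·X − DX·Y`). -/
noncomputable def lieBkt {F : Type*} [NormedAddCommGroup F] [NormedSpace ℝ F]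
    (X Y : F → F) : F → F := fun p => fderiv ℝ Y p (X p) - fderiv ℝ X p (Y p)

/-- The Riemann curvature tensor in coordinates:
`𝓡(U,W)Z = ∂_UΓ(W,Z) − ∂_WΓ(U,Z) + Γ(U,Γ(W,Z)) − Γ(W,Γ(U,Z))`. -/
noncomputable def Riem {E : Type*} [NormedAddCommGroup E] [NormedSpace ℝ E]
    (Γ : E → E →L[ℝ] E →L[ℝ] E) (x u w z : E) : E :=
  fderiv ℝ Γ x u w z - fderiv ℝ Γ x w u z + Γ x u (Γ x w z) - Γ x w (Γ x u z)

/-!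
View the coordinates `x, R, V` of `TM ⊕ TM` as the base projection and two vector fields along it.
For the connection pulled back by this projection, `f₁` has base velocity `V` and turns the frame,
`∇R = -V`, `∇V = R`, while `f₁₂₁` has base velocity `R` and is parallel, `∇R = ∇V = 0`. Torsion
freeness gives the base velocity of the bracket, `∇_{f₁} R - ∇_{f₁₂₁} V = -V`. In the Ricci identity
`∇_X ∇_Y W - ∇_Y ∇_X W - ∇_{[X,Y]} W = 𝓡(dx(X), dx(Y)) W` for `X = f₁`, `Y = f₁₂₁` and `W` either of
`R`, `V`, both second-order terms vanish, because `R` and `V` are parallel along `f₁₂₁` and `f₁`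
permutes them up to sign; hence `∇_{[f₁,f₁₂₁]} W = -𝓡(V, R) W`. Along an integral curve of `X`, the
covariant derivative `D_t` is `∇_X`.
-/

section PullbackConnection

variable {E P : Type*} [NormedAddCommGroup E] [NormedSpace ℝ E] [NormedAddCommGroup P]
  [NormedSpace ℝ P] {Γ : E → E →L[ℝ] E →L[ℝ] E} {π : P → E} {X Y : P → P} {W : P → E} {p : P}

/-- The covariant derivative `∇_X W = dW(X) + Γ(dπ(X), W)` of a vector field `W` along the map
`π : P → E` in the direction of a vector field `X` on `P`, for the pullback under `π` of the
connection with Christoffel symbols `Γ`. -/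
noncomputable def covDerivAlong (Γ : E → E →L[ℝ] E →L[ℝ] E) (π : P → E) (X : P → P) (W : P → E)
    (p : P) : E :=
  fderiv ℝ W p (X p) + Γ (π p) (fderiv ℝ π p (X p)) (W p)

@[simp]
theorem covDerivAlong_zero : covDerivAlong Γ π X 0 = 0 := by
  ext p
  simp [covDerivAlong]

@[simp]
theorem covDerivAlong_neg : covDerivAlong Γ π X (-W) = -covDerivAlong Γ π X W := by
  ext p
  simp [covDerivAlong, fderiv_neg, add_comm]

theorem fderiv_lieBkt_apply {f : P → E} (hf : ContDiffAt ℝ 2 f p) (hX : DifferentiableAt ℝ X p)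
    (hY : DifferentiableAt ℝ Y p) :
    fderiv ℝ f p (lieBkt X Y p) =
      fderiv ℝ (fun q => fderiv ℝ f q (Y q)) p (X p) -
        fderiv ℝ (fun q => fderiv ℝ f q (X q)) p (Y p) :=
  VectorField.fderiv_apply_lieBracket hf (by simp) hY hX

/-- Torsion freeness of the pullback connection. -/
theorem fderiv_lieBkt_eq_covDerivAlong_sub (hsym : ∀ u v, Γ (π p) u v = Γ (π p) v u)
    (hπ : ContDiffAt ℝ 2 π p) (hX : DifferentiableAt ℝ X p) (hY : DifferentiableAt ℝ Y p) :
    fderiv ℝ π p (lieBkt X Y p) =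
      covDerivAlong Γ π X (fun q => fderiv ℝ π q (Y q)) p -
        covDerivAlong Γ π Y (fun q => fderiv ℝ π q (X q)) p := by
  rw [fderiv_lieBkt_apply hπ hX hY, covDerivAlong, covDerivAlong,
    hsym (fderiv ℝ π p (X p)) (fderiv ℝ π p (Y p)), add_sub_add_right_eq_sub]

theorem differentiableAt_fderiv_apply {f : P → E} (hf : ContDiffAt ℝ 2 f p)
    (hX : DifferentiableAt ℝ X p) : DifferentiableAt ℝ (fun q => fderiv ℝ f q (X q)) p :=
  ((hf.fderiv_right (m := 1) (by norm_num)).differentiableAt one_ne_zero).clm_apply hX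

theorem hasFDerivAt_christoffel_apply {Γ' : E →L[ℝ] E →L[ℝ] E →L[ℝ] E} {A : P → E}
    {π' A' W' : P →L[ℝ] E} (hΓ : HasFDerivAt Γ Γ' (π p)) (hπ : HasFDerivAt π π' p)
    (hA : HasFDerivAt A A' p) (hW : HasFDerivAt W W' p) :
    HasFDerivAt (fun q => Γ (π q) (A q) (W q))
      ((Γ (π p) (A p)).comp W' +
        ((Γ (π p)).comp A' + (Γ'.comp π').flip (A p)).flip (W p)) p :=
  ((HasFDerivAt.comp (g := Γ) p hΓ hπ).clm_apply hA).clm_apply hW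

theorem covDerivAlong_covDerivAlong (hΓ : DifferentiableAt ℝ Γ (π p)) (hπ : ContDiffAt ℝ 2 π p)
    (hW : ContDiffAt ℝ 2 W p) (hY : DifferentiableAt ℝ Y p) :
    covDerivAlong Γ π X (covDerivAlong Γ π Y W) p =
      fderiv ℝ (fun q => fderiv ℝ W q (Y q)) p (X p) +
        (Γ (π p) (fderiv ℝ π p (Y p)) (fderiv ℝ W p (X p)) +
          (Γ (π p) (fderiv ℝ (fun q => fderiv ℝ π q (Y q)) p (X p)) (W p) +
            fderiv ℝ Γ (π p) (fderiv ℝ π p (X p)) (fderiv ℝ π p (Y p)) (W p))) +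
        Γ (π p) (fderiv ℝ π p (X p)) (covDerivAlong Γ π Y W p) := by
  have hdW := (differentiableAt_fderiv_apply hW hY).hasFDerivAt
  have hΓW := hasFDerivAt_christoffel_apply hΓ.hasFDerivAt
    (hπ.differentiableAt two_ne_zero).hasFDerivAt
    (differentiableAt_fderiv_apply hπ hY).hasFDerivAt
    (hW.differentiableAt two_ne_zero).hasFDerivAt
  have hderiv : fderiv ℝ (covDerivAlong Γ π Y W) p = _ := (hdW.add hΓW).fderiv
  rw [covDerivAlong, hderiv]
  rfl

/-- The Ricci identity for the pullback connection. -/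
theorem covDerivAlong_lieBkt (hΓ : DifferentiableAt ℝ Γ (π p)) (hπ : ContDiffAt ℝ 2 π p)
    (hW : ContDiffAt ℝ 2 W p) (hX : DifferentiableAt ℝ X p) (hY : DifferentiableAt ℝ Y p) :
    covDerivAlong Γ π (lieBkt X Y) W p =
      covDerivAlong Γ π X (covDerivAlong Γ π Y W) p -
        covDerivAlong Γ π Y (covDerivAlong Γ π X W) p -
        Riem Γ (π p) (fderiv ℝ π p (X p)) (fderiv ℝ π p (Y p)) (W p) := by
  rw [covDerivAlong_covDerivAlong hΓ hπ hW hX, covDerivAlong_covDerivAlong hΓ hπ hW hY,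
    covDerivAlong, fderiv_lieBkt_apply hW hX hY, fderiv_lieBkt_apply hπ hX hY, Riem]
  simp only [covDerivAlong, map_add, map_sub, sub_apply]
  abel

theorem deriv_add_christoffel_eq_covDerivAlong {c : ℝ → P} {t : ℝ}
    (hc : HasDerivAt c (X (c t)) t) (hπ : DifferentiableAt ℝ π (c t))
    (hW : DifferentiableAt ℝ W (c t)) :
    deriv (fun s => W (c s)) t + Γ (π (c t)) (deriv (fun s => π (c s)) t) (W (c t)) =
      covDerivAlong Γ π X W (c t) := by
  have hπc : deriv (fun s => π (c s)) t = _ := (hπ.hasFDerivAt.comp_hasDerivAt t hc).deriv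
  have hWc : deriv (fun s => W (c s)) t = _ := (hW.hasFDerivAt.comp_hasDerivAt t hc).deriv
  rw [hπc, hWc, covDerivAlong]

end PullbackConnection

section DoubleTangentChart

variable {E : Type*} [NormedAddCommGroup E] [NormedSpace ℝ E] {Γ : E → E →L[ℝ] E →L[ℝ] E}
  {u a b u' a' b' : E × E × E → E} {p : E × E × E}

/-- The vector field on a chart of `TM ⊕ TM`, with coordinates `(x, R, V)`, whose integral curves
satisfy `ẋ = u`, `D_t R = a`, `D_t V = b`. -/
noncomputable def covField (Γ : E → E →L[ℝ] E →L[ℝ] E) (u a b : E × E × E → E) (p : E × E × E) :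
    E × E × E :=
  (u p, a p - Γ p.1 (u p) p.2.1, b p - Γ p.1 (u p) p.2.2)

theorem differentiableAt_covField (hΓ : DifferentiableAt ℝ Γ p.1) (hu : DifferentiableAt ℝ u p)
    (ha : DifferentiableAt ℝ a p) (hb : DifferentiableAt ℝ b p) :
    DifferentiableAt ℝ (covField Γ u a b) p := by
  have hΓu {W : E × E × E → E} (hW : DifferentiableAt ℝ W p) :
      DifferentiableAt ℝ (fun q => Γ q.1 (u q) (W q)) p :=
    (hasFDerivAt_christoffel_apply hΓ.hasFDerivAt hasFDerivAt_fst hu.hasFDerivAt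
      hW.hasFDerivAt).differentiableAt
  exact hu.prodMk ((ha.sub (hΓu differentiableAt_snd.fst)).prodMk
    (hb.sub (hΓu differentiableAt_snd.snd)))

theorem covDerivAlong_covField_left :
    covDerivAlong Γ Prod.fst (covField Γ u a b) (fun q => q.2.1) = a := by
  ext q
  have hq : fderiv ℝ (fun q : E × E × E => q.2.1) q = _ := hasFDerivAt_snd.fst.fderiv
  simp [covDerivAlong, hq, covField, fderiv_fst]

theorem covDerivAlong_covField_right :
    covDerivAlong Γ Prod.fst (covField Γ u a b) (fun q => q.2.2) = b := by
  ext q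
  have hq : fderiv ℝ (fun q : E × E × E => q.2.2) q = _ := hasFDerivAt_snd.snd.fderiv
  simp [covDerivAlong, hq, covField, fderiv_fst]

theorem lieBkt_covField_fst (hsym : ∀ v w, Γ p.1 v w = Γ p.1 w v)
    (hX : DifferentiableAt ℝ (covField Γ u a b) p)
    (hY : DifferentiableAt ℝ (covField Γ u' a' b') p) :
    (lieBkt (covField Γ u a b) (covField Γ u' a' b') p).1 =
      covDerivAlong Γ Prod.fst (covField Γ u a b) u' p -
        covDerivAlong Γ Prod.fst (covField Γ u' a' b') u p := by
  simpa [fderiv_fst, covField] using fderiv_lieBkt_eq_covDerivAlong_sub hsym contDiffAt_fst hX hY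

theorem covDerivAlong_lieBkt_covField {W : E × E × E → E} (hΓ : DifferentiableAt ℝ Γ p.1)
    (hW : ContDiffAt ℝ 2 W p) (hX : DifferentiableAt ℝ (covField Γ u a b) p)
    (hY : DifferentiableAt ℝ (covField Γ u' a' b') p) :
    covDerivAlong Γ Prod.fst (lieBkt (covField Γ u a b) (covField Γ u' a' b')) W p =
      covDerivAlong Γ Prod.fst (covField Γ u a b)
          (covDerivAlong Γ Prod.fst (covField Γ u' a' b') W) p -
        covDerivAlong Γ Prod.fst (covField Γ u' a' b')
          (covDerivAlong Γ Prod.fst (covField Γ u a b) W) p -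
        Riem Γ p.1 (u p) (u' p) (W p) := by
  simpa [fderiv_fst, covField] using covDerivAlong_lieBkt hΓ contDiffAt_fst hW hX hY

/-- The field `f₁`: base velocity `V` and a frame that turns, `D_t R = -V`, `D_t V = R`. -/
noncomputable def turningField (Γ : E → E →L[ℝ] E →L[ℝ] E) : E × E × E → E × E × E :=
  covField Γ (fun q => q.2.2) (-fun q => q.2.2) (fun q => q.2.1)

/-- The field `f₁₂₁`: base velocity `R` and a parallel frame, `D_t R = D_t V = 0`. -/
noncomputable def parallelField (Γ : E → E →L[ℝ] E →L[ℝ] E) : E × E × E → E × E × E :=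
  covField Γ (fun q => q.2.1) 0 0

theorem differentiableAt_turningField (hΓ : DifferentiableAt ℝ Γ p.1) :
    DifferentiableAt ℝ (turningField Γ) p :=
  differentiableAt_covField hΓ (by fun_prop) (by fun_prop) (by fun_prop)

theorem differentiableAt_parallelField (hΓ : DifferentiableAt ℝ Γ p.1) :
    DifferentiableAt ℝ (parallelField Γ) p :=
  differentiableAt_covField hΓ (by fun_prop) (by fun_prop) (by fun_prop)

theorem lieBkt_turningField_parallelField_fst (hΓ : DifferentiableAt ℝ Γ p.1)
    (hsym : ∀ v w, Γ p.1 v w = Γ p.1 w v) :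
    (lieBkt (turningField Γ) (parallelField Γ) p).1 = -p.2.2 := by
  rw [turningField, parallelField, lieBkt_covField_fst hsym (differentiableAt_turningField hΓ)
    (differentiableAt_parallelField hΓ), covDerivAlong_covField_left, covDerivAlong_covField_right]
  simp

theorem covDerivAlong_lieBkt_turningField_parallelField_left (hΓ : DifferentiableAt ℝ Γ p.1) :
    covDerivAlong Γ Prod.fst (lieBkt (turningField Γ) (parallelField Γ)) (fun q => q.2.1) p =
      -Riem Γ p.1 p.2.2 p.2.1 p.2.1 := by
  rw [turningField, parallelField, covDerivAlong_lieBkt_covField hΓ (by fun_prop)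
    (differentiableAt_turningField hΓ) (differentiableAt_parallelField hΓ)]
  simp [covDerivAlong_covField_left, covDerivAlong_covField_right]

theorem covDerivAlong_lieBkt_turningField_parallelField_right (hΓ : DifferentiableAt ℝ Γ p.1) :
    covDerivAlong Γ Prod.fst (lieBkt (turningField Γ) (parallelField Γ)) (fun q => q.2.2) p =
      -Riem Γ p.1 p.2.2 p.2.1 p.2.2 := by
  rw [turningField, parallelField, covDerivAlong_lieBkt_covField hΓ (by fun_prop)
    (differentiableAt_turningField hΓ) (differentiableAt_parallelField hΓ)]
  simp [covDerivAlong_covField_left, covDerivAlong_covField_right]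

end DoubleTangentChart

/-- `U` is the domain of the chart; outside it `Γ` takes arbitrary values. -/
theorem stmt12_general {E : Type*} [NormedAddCommGroup E] [NormedSpace ℝ E]
    (Γ : E → E →L[ℝ] E →L[ℝ] E) {U : Set E} (hΓ : ∀ x ∈ U, DifferentiableAt ℝ Γ x)
    (hsym : ∀ x ∈ U, ∀ u v, Γ x u v = Γ x v u)
    (f₁ f₁₂₁ f₁₁₂₁ : E × E × E → E × E × E)
    (hf₁ : f₁ = fun p => (p.2.2, -(p.2.2 + Γ p.1 p.2.2 p.2.1), p.2.1 - Γ p.1 p.2.2 p.2.2))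
    (hf₁₂₁ : f₁₂₁ = fun p => (p.2.1, -(Γ p.1 p.2.1 p.2.1), -(Γ p.1 p.2.1 p.2.2)))
    (hf₁₁₂₁ : f₁₁₂₁ = lieBkt f₁ f₁₂₁) :
    (∀ p, p.1 ∈ U → (f₁₁₂₁ p).1 = -p.2.2) ∧
    (∀ (c : ℝ → E × E × E) (t : ℝ), (c t).1 ∈ U → HasDerivAt c (f₁₁₂₁ (c t)) t →
      deriv (fun s => (c s).1) t = -(c t).2.2 ∧
        deriv (fun s => (c s).2.1) t
            + Γ ((c t).1) (deriv (fun s => (c s).1) t) ((c t).2.1)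
          = -Riem Γ ((c t).1) ((c t).2.2) ((c t).2.1) ((c t).2.1) ∧
        deriv (fun s => (c s).2.2) t
            + Γ ((c t).1) (deriv (fun s => (c s).1) t) ((c t).2.2)
          = -Riem Γ ((c t).1) ((c t).2.2) ((c t).2.1) ((c t).2.2)) := by
  have hturn : f₁ = turningField Γ := by
    simp only [hf₁, neg_add', turningField, covField, Pi.neg_apply, funext_iff, implies_true]
  have hpar : f₁₂₁ = parallelField Γ := by
    simp only [hf₁₂₁, parallelField, covField, Pi.zero_apply, zero_sub, funext_iff, implies_true]
  rw [hf₁₁₂₁, hturn, hpar]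
  have hbase (p : E × E × E) (hp : p.1 ∈ U) :=
    lieBkt_turningField_parallelField_fst (hΓ p.1 hp) (hsym p.1 hp)
  refine ⟨hbase, fun c t ht hc => ⟨?_, ?_, ?_⟩⟩
  · exact (hasFDerivAt_fst.comp_hasDerivAt t hc).deriv.trans (hbase (c t) ht)
  · rw [← covDerivAlong_lieBkt_turningField_parallelField_left (hΓ _ ht)]
    exact deriv_add_christoffel_eq_covDerivAlong (W := fun q => q.2.1) hc differentiableAt_fst
      (by fun_prop)
  · rw [← covDerivAlong_lieBkt_turningField_parallelField_right (hΓ _ ht)]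
    exact deriv_add_christoffel_eq_covDerivAlong (W := fun q => q.2.2) hc differentiableAt_fst
      (by fun_prop)

/-- on a chart of `TM ⊕ TM` (coordinates `p = (x, R, V)`), with
`f₁` as before and `f₁₂₁ = R∂_x − Γ(R,R)∂_R − Γ(R,V)∂_V`, the iterated bracket
`f₁₁₂₁ = [f₁, f₁₂₁]` has `x`-component `−V`, and its integral curves satisfy
`ẋ = −V`, `D_tR = −𝓡(V,R)R`, `D_tV = −𝓡(V,R)V` (`D_tW = Ẇ + Γ(ẋ,W)`). -/
theorem stmt12 {E : Type*} [NormedAddCommGroup E] [NormedSpace ℝ E]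
    (Γ : E → E →L[ℝ] E →L[ℝ] E) (hΓ : ContDiff ℝ (⊤ : ℕ∞) Γ)
    (hsym : ∀ x u v, Γ x u v = Γ x v u)
    (f₁ f₁₂₁ f₁₁₂₁ : E × E × E → E × E × E)
    (hf₁ : f₁ = fun p => (p.2.2, -(p.2.2 + Γ p.1 p.2.2 p.2.1), p.2.1 - Γ p.1 p.2.2 p.2.2))
    (hf₁₂₁ : f₁₂₁ = fun p => (p.2.1, -(Γ p.1 p.2.1 p.2.1), -(Γ p.1 p.2.1 p.2.2)))
    (hf₁₁₂₁ : f₁₁₂₁ = lieBkt f₁ f₁₂₁) :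
    (∀ p, (f₁₁₂₁ p).1 = -p.2.2) ∧
    (∀ c : ℝ → E × E × E, (∀ t, HasDerivAt c (f₁₁₂₁ (c t)) t) →
      ∀ t, deriv (fun s => (c s).1) t = -(c t).2.2 ∧
        deriv (fun s => (c s).2.1) t
            + Γ ((c t).1) (deriv (fun s => (c s).1) t) ((c t).2.1)
          = -Riem Γ ((c t).1) ((c t).2.2) ((c t).2.1) ((c t).2.1) ∧
        deriv (fun s => (c s).2.2) t
            + Γ ((c t).1) (deriv (fun s => (c s).1) t) ((c t).2.2)
          = -Riem Γ ((c t).1) ((c t).2.2) ((c t).2.1) ((c t).2.2)) := by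
  obtain ⟨hbase, hcurve⟩ := stmt12_general (U := Set.univ) Γ
    (fun x _ => hΓ.differentiable (by simp) x) (fun x _ => hsym x) f₁ f₁₂₁ f₁₁₂₁ hf₁ hf₁₂₁ hf₁₁₂₁
  exact ⟨fun p => hbase p (Set.mem_univ _), fun c hc t => hcurve c t (Set.mem_univ _) (hc t)⟩
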